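/- Let g : ℝ → ℝ be infinitely differentiable, and let ĝ₀ = (1/π)∫_{−1}^{1} g(x)/√(1−x²) dx and ĝₙ = (2/π)∫_{−1}^{1} g(x)·Tₙ(x)/√(1−x²) dx for n ≥ 1 be its Fourier–Chebyshev coefficients. Then the series α(x) := Σ_{n=0}^{∞} (ĝₙ/σₙ)·Tₙ(x), with σ₀ = ln(2)/2 and σₙ = 1/(2n) for n ≥ 1, converges uniformly on [−1,1] to a function that coincides on [−1,1] with an infinitely differentiable function on ℝ, and the function λ(x) := α(x)/√(1−x²) satisfies −(1/(2π))∫_{−1}^{1} ln|x−y|·λ(y) dy = g(x) for every x ∈ (−1,1). In particular the solution of the Laplace single-layer equation S₀λ = g with smooth right-hand side g has the form λ = α/√(1−x²) with α smooth on [−1,1]. -/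

import Mathlib

open Real Set MeasureTheory intervalIntegral Filter Finset

/-- The `n`-th Chebyshev polynomial of the first kind, as a real function. -/
noncomputable def chebT (n : ℕ) : ℝ → ℝ := fun x => (Polynomial.Chebyshev.T ℝ n).eval x

/-- The eigenvalues of the weighted Laplace single-layer operator:
`σ₀ = ln 2 / 2` and `σₙ = 1/(2n)` for `n ≥ 1`. -/
noncomputable def sigmaCheb : ℕ → ℝ := fun n =>
  if n = 0 then Real.log 2 / 2 else 1 / (2 * n)

/-- The Fourier–Chebyshev coefficients of a function. -/
noncomputable def fourierCheb (g : ℝ → ℝ) : ℕ → ℝ := fun n =>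
  if n = 0 then (1 / π) * ∫ x in (-1 : ℝ)..1, g x / Real.sqrt (1 - x ^ 2)
  else (2 / π) * ∫ x in (-1 : ℝ)..1, g x * chebT n x / Real.sqrt (1 - x ^ 2)

/-!
Substituting `x = cos θ` turns the Chebyshev expansion of `g` into the cosine series of the smooth
even `2π`-periodic function `g (cos θ)`, so the coefficients decay faster than every power of `n`.

The single-layer operator is diagonal in this basis: away from a null set
`log |cos φ - cos t| = log 2 + log |sin ((t + φ) / 2)| + log |sin ((t - φ) / 2)|`, and convolution
with an even periodic kernel maps `cos (n t)` to a multiple of itself. Dividing the coefficients by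
the eigenvalues `σₙ` costs only one power of `n`.

To extend the series smoothly to the line, cut `Tₙ` off at the distance `1 / Mₙ` from `[-1, 1]`,
where `Mₙ = (n + 1) ^ 2` is the rate in Markov's bound for the derivatives of `Tₙ`. By Taylor's
formula `Tₙ` has grown only by a constant factor there, so the `k`-th derivative of the cut-off
term is still `O(Mₙ ^ k)`, uniformly on the line, which the decay of the coefficients absorbs.
-/

section SmoothExtension

open Polynomial

lemma exists_bound_iteratedDeriv_smoothTransition (k : ℕ) :
    ∃ C : ℝ, ∀ x, |iteratedDeriv k smoothTransition x| ≤ C := by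
  have hst : ContDiff ℝ k smoothTransition := Real.smoothTransition.contDiff
  obtain ⟨C, hC⟩ := (isCompact_Icc (a := (0 : ℝ)) (b := 1)).exists_bound_of_continuousOn
    (hst.continuous_iteratedDeriv' k).continuousOn
  have bound_of_eventuallyEq_const : ∀ c x : ℝ, |c| ≤ 1 →
      smoothTransition =ᶠ[nhds x] (fun _ => c) → |iteratedDeriv k smoothTransition x| ≤ 1 := by
    intro c x hc h
    rw [h.iteratedDeriv_eq, iteratedDeriv_const]
    split_ifs <;> simp [hc]
  refine ⟨max C 1, fun x => ?_⟩
  rcases lt_or_ge x 0 with hx0 | hx0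
  · refine (bound_of_eventuallyEq_const 0 x (by simp) ?_).trans (le_max_right _ _)
    filter_upwards [Iio_mem_nhds hx0] with y hy
    exact Real.smoothTransition.zero_of_nonpos (le_of_lt hy)
  rcases lt_or_ge 1 x with hx1 | hx1
  · refine (bound_of_eventuallyEq_const 1 x (by simp) ?_).trans (le_max_right _ _)
    filter_upwards [Ioi_mem_nhds hx1] with y hy
    exact Real.smoothTransition.one_of_one_le (le_of_lt hy)
  · exact (hC x ⟨hx0, hx1⟩).trans (le_max_left _ _)

lemma exists_bound_iteratedFDeriv_smoothTransition_affine :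
    ∃ C : ℕ → ℝ, ∀ (k : ℕ) (c d x : ℝ),
      ‖iteratedFDeriv ℝ k (fun x => smoothTransition (c + d * x)) x‖ ≤ C k * |d| ^ k := by
  choose C hC using exists_bound_iteratedDeriv_smoothTransition
  refine ⟨C, fun k c d x => ?_⟩
  rw [norm_iteratedFDeriv_eq_norm_iteratedDeriv,
    iteratedDeriv_comp_const_mul (f := fun y => smoothTransition (c + y))
      (Real.smoothTransition.contDiff.comp (contDiff_const.add contDiff_id)) d,
    iteratedDeriv_comp_const_add, norm_mul, norm_pow, Real.norm_eq_abs, Real.norm_eq_abs, mul_comm]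
  exact mul_le_mul_of_nonneg_right (hC k _) (by positivity)

lemma norm_iteratedFDeriv_mul_le_of_pow_bounds {𝕜 E A : Type*} [NontriviallyNormedField 𝕜]
    [NormedAddCommGroup E] [NormedSpace 𝕜 E] [NormedRing A] [NormedAlgebra 𝕜 A] {f g : E → A}
    {k : ℕ} (hf : ContDiff 𝕜 k f) (hg : ContDiff 𝕜 k g) {a b : ℕ → ℝ} {M : ℝ} {x : E}
    (ha : ∀ i, ‖iteratedFDeriv 𝕜 i f x‖ ≤ a i * M ^ i)
    (hb : ∀ i, ‖iteratedFDeriv 𝕜 i g x‖ ≤ b i * M ^ i) :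
    ‖iteratedFDeriv 𝕜 k (fun y => f y * g y) x‖
      ≤ (∑ i ∈ Finset.range (k + 1), (k.choose i : ℝ) * a i * b (k - i)) * M ^ k := by
  refine (norm_iteratedFDeriv_mul_le hf hg x le_rfl).trans ?_
  rw [Finset.sum_mul]
  refine Finset.sum_le_sum fun i hi => ?_
  have hik : i ≤ k := Nat.lt_succ_iff.mp (Finset.mem_range.mp hi)
  calc _ ≤ (k.choose i : ℝ) * (a i * M ^ i) * (b (k - i) * M ^ (k - i)) := by
        have h1 := (norm_nonneg _).trans (ha i)
        gcongr
        exacts [ha i, hb _]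
    _ = _ := by
      rw [← Nat.add_sub_of_le hik, pow_add, Nat.add_sub_of_le hik]
      ring

/-- The smooth cutoff which is `1` on `[a, b]` and vanishes at distance `1 / M` from it.
The scale is given by its inverse `M` so that a `k`-th derivative has size `M ^ k`. -/
noncomputable def smoothCutoff (a b M : ℝ) : ℝ → ℝ := fun x =>
  smoothTransition (1 + M * (x - a)) * smoothTransition (1 + M * (b - x))

lemma smoothCutoff_eq_affine (a b M : ℝ) :
    smoothCutoff a b M = fun x =>
      smoothTransition (1 - M * a + M * x) * smoothTransition (1 + M * b + -M * x) := by
  ext x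
  rw [smoothCutoff]
  ring_nf

lemma contDiff_smoothCutoff (a b M : ℝ) {n : ℕ∞} : ContDiff ℝ n (smoothCutoff a b M) :=
  (Real.smoothTransition.contDiff.comp (by fun_prop)).mul
    (Real.smoothTransition.contDiff.comp (by fun_prop))

lemma smoothCutoff_eq_one {a b M x : ℝ} (hM : 0 ≤ M) (hx : x ∈ Icc a b) :
    smoothCutoff a b M x = 1 := by
  have ha : 0 ≤ M * (x - a) := mul_nonneg hM (sub_nonneg.mpr hx.1)
  have hb : 0 ≤ M * (b - x) := mul_nonneg hM (sub_nonneg.mpr hx.2)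
  rw [smoothCutoff, Real.smoothTransition.one_of_one_le (by linarith),
    Real.smoothTransition.one_of_one_le (by linarith), one_mul]

lemma tsupport_smoothCutoff_subset (a b : ℝ) {M : ℝ} (hM : 0 < M) :
    tsupport (smoothCutoff a b M) ⊆ Icc (a - 1 / M) (b + 1 / M) := by
  refine closure_minimal (fun x hx => ?_) isClosed_Icc
  have hMM : M * (1 / M) = 1 := mul_one_div_cancel hM.ne'
  rw [Function.mem_support] at hx
  contrapose! hx
  rw [smoothCutoff, mul_eq_zero]
  rcases not_and_or.mp hx with h | h
  · exact .inl (Real.smoothTransition.zero_of_nonpos (by nlinarith))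
  · exact .inr (Real.smoothTransition.zero_of_nonpos (by nlinarith))

lemma exists_bound_iteratedFDeriv_smoothCutoff :
    ∃ B : ℕ → ℝ, ∀ (a b M : ℝ) (k : ℕ) (x : ℝ), 0 ≤ M →
      ‖iteratedFDeriv ℝ k (smoothCutoff a b M) x‖ ≤ B k * M ^ k := by
  obtain ⟨C, hC⟩ := exists_bound_iteratedFDeriv_smoothTransition_affine
  refine ⟨fun k => ∑ i ∈ Finset.range (k + 1), (k.choose i : ℝ) * C i * C (k - i),
    fun a b M k x hM => ?_⟩
  rw [smoothCutoff_eq_affine]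
  refine norm_iteratedFDeriv_mul_le_of_pow_bounds (a := C) (b := C)
    (Real.smoothTransition.contDiff.comp (by fun_prop))
    (Real.smoothTransition.contDiff.comp (by fun_prop)) (fun i => ?_) fun i => ?_
  · exact (hC i (1 - M * a) M x).trans_eq (by rw [abs_of_nonneg hM])
  · exact (hC i (1 + M * b) (-M) x).trans_eq (by rw [abs_neg, abs_of_nonneg hM])

lemma iteratedDeriv_polynomial_eval {𝕜 : Type*} [NontriviallyNormedField 𝕜] (p : 𝕜[X]) (k : ℕ) :
    iteratedDeriv k (fun x => p.eval x) = fun x => (derivative^[k] p).eval x := by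
  induction k with
  | zero => simp
  | succ k ih =>
    rw [iteratedDeriv_succ, ih]
    ext x
    rw [Polynomial.deriv, Function.iterate_succ_apply']

lemma polynomial_eval_eq_sum_iterate_derivative {K : Type*} [Field K] [CharZero K] (p : K[X])
    (x y : K) :
    p.eval x = ∑ j ∈ Finset.range (p.natDegree + 1),
      (derivative^[j] p).eval y / (j.factorial : K) * (x - y) ^ j := by
  rw [← taylor_eval_sub y p x, eval_eq_sum_range, natDegree_taylor]
  refine Finset.sum_congr rfl fun j _ => ?_
  rw [taylor_coeff, ← factorial_smul_hasseDeriv, LinearMap.smul_apply, eval_smul, nsmul_eq_mul,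
    mul_div_cancel_left₀ _ (Nat.cast_ne_zero.mpr j.factorial_ne_zero)]

lemma abs_polynomial_eval_le_mul_exp {p : ℝ[X]} {C M x y : ℝ} (hM : 0 ≤ M)
    (h : ∀ j : ℕ, |(derivative^[j] p).eval y| ≤ C * M ^ j) :
    |p.eval x| ≤ C * exp (M * |x - y|) := by
  have hC : 0 ≤ C := by simpa using (abs_nonneg _).trans (h 0)
  calc |p.eval x|
      ≤ ∑ j ∈ Finset.range (p.natDegree + 1),
          |(derivative^[j] p).eval y / (j.factorial : ℝ) * (x - y) ^ j| := by
        rw [polynomial_eval_eq_sum_iterate_derivative p x y]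
        exact Finset.abs_sum_le_sum_abs _ _
    _ ≤ ∑ j ∈ Finset.range (p.natDegree + 1), C * ((M * |x - y|) ^ j / (j.factorial : ℝ)) := by
        refine Finset.sum_le_sum fun j _ => ?_
        rw [abs_mul, abs_div, abs_pow, Nat.abs_cast, mul_pow, mul_div_assoc', ← mul_assoc,
          mul_div_right_comm]
        gcongr
        exact h j
    _ ≤ C * exp (M * |x - y|) := by
        rw [← Finset.mul_sum]
        gcongr
        exact sum_le_exp_of_nonneg (by positivity) _

lemma abs_iterate_derivative_eval_le_of_mem_Icc {p : ℝ[X]} {a b C M x : ℝ} (hab : a ≤ b)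
    (hM : 0 < M) (hp : ∀ (j : ℕ), ∀ y ∈ Icc a b, |(derivative^[j] p).eval y| ≤ C * M ^ j)
    (k : ℕ) (hx : x ∈ Icc (a - 1 / M) (b + 1 / M)) :
    |(derivative^[k] p).eval x| ≤ C * M ^ k * exp 1 := by
  obtain ⟨y, hy, hxy⟩ : ∃ y ∈ Icc a b, |x - y| ≤ 1 / M := by
    refine ⟨max a (min b x), ⟨le_max_left _ _, max_le hab (min_le_left _ _)⟩, ?_⟩
    have hM' : 0 < 1 / M := by positivity
    rw [abs_le]
    grind
  have hC : 0 ≤ C := by simpa using (abs_nonneg _).trans (hp 0 y hy)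
  have hderiv : ∀ j : ℕ, |(derivative^[j] (derivative^[k] p)).eval y| ≤ C * M ^ k * M ^ j := by
    intro j
    rw [← Function.iterate_add_apply, mul_assoc, ← pow_add, add_comm k]
    exact hp (j + k) y hy
  calc |(derivative^[k] p).eval x| ≤ C * M ^ k * exp (M * |x - y|) :=
        abs_polynomial_eval_le_mul_exp hM.le hderiv
    _ ≤ C * M ^ k * exp 1 := by
        gcongr
        rwa [le_div_iff₀' hM] at hxy

lemma exists_bound_iteratedFDeriv_smoothCutoff_mul_eval :
    ∃ D : ℕ → ℝ, ∀ {a b C M : ℝ} {p : ℝ[X]}, a ≤ b → 0 < M →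
      (∀ (j : ℕ), ∀ y ∈ Icc a b, |(derivative^[j] p).eval y| ≤ C * M ^ j) →
      ∀ (k : ℕ) (x : ℝ),
        ‖iteratedFDeriv ℝ k (fun x => smoothCutoff a b M x * p.eval x) x‖
          ≤ D k * (C * M ^ k) := by
  obtain ⟨B, hB⟩ := exists_bound_iteratedFDeriv_smoothCutoff
  have hB0 : ∀ k, 0 ≤ B k := fun k => by
    simpa using (norm_nonneg _).trans (hB 0 0 1 k 0 zero_le_one)
  refine ⟨fun k => ∑ i ∈ Finset.range (k + 1), (k.choose i : ℝ) * B i * exp 1,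
    fun {a b C M p} hab hM hp k x => ?_⟩
  by_cases hx : x ∈ Icc (a - 1 / M) (b + 1 / M)
  · refine (norm_iteratedFDeriv_mul_le_of_pow_bounds (b := fun _ => C * exp 1)
      (contDiff_smoothCutoff a b M) (by simpa using p.contDiff_aeval (𝕜 := ℝ) k)
      (fun i => hB a b M i x hM.le) fun i => ?_).trans_eq ?_
    · rw [norm_iteratedFDeriv_eq_norm_iteratedDeriv, iteratedDeriv_polynomial_eval, mul_right_comm]
      exact abs_iterate_derivative_eval_le_of_mem_Icc hab hM hp i hx
    · simp only [Finset.sum_mul]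
      exact Finset.sum_congr rfl fun i _ => by ring
  · have hzero : iteratedFDeriv ℝ k (fun x => smoothCutoff a b M x * p.eval x) x = 0 := by
      refine Function.notMem_support.mp fun h => hx ?_
      exact tsupport_smoothCutoff_subset a b hM
        (tsupport_mul_subset_left (support_iteratedFDeriv_subset k h))
    have hC : 0 ≤ C := by simpa using (abs_nonneg _).trans (hp 0 a (left_mem_Icc.mpr hab))
    rw [hzero, norm_zero]
    exact mul_nonneg (Finset.sum_nonneg fun i _ =>
      mul_nonneg (mul_nonneg (Nat.cast_nonneg _) (hB0 i)) (exp_pos _).le) (by positivity)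

theorem exists_contDiff_eqOn_tsum_eval {ι : Type*} {p : ι → ℝ[X]} {C M : ι → ℝ} {a b : ℝ}
    (hab : a ≤ b) (hM : ∀ i, 0 < M i)
    (hp : ∀ i (j : ℕ), ∀ y ∈ Icc a b, |(derivative^[j] (p i)).eval y| ≤ C i * M i ^ j)
    (hs : ∀ k : ℕ, Summable fun i => C i * M i ^ k) :
    ∃ A : ℝ → ℝ, ContDiff ℝ (⊤ : ℕ∞) A ∧ EqOn (fun x => ∑' i, (p i).eval x) A (Icc a b) := by
  obtain ⟨D, hD⟩ := exists_bound_iteratedFDeriv_smoothCutoff_mul_eval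
  refine ⟨fun x => ∑' i, smoothCutoff a b (M i) x * (p i).eval x, ?_, fun x hx => ?_⟩
  · exact contDiff_tsum (v := fun k i => D k * (C i * M i ^ k))
      (fun i => (contDiff_smoothCutoff a b (M i)).mul
        (by simpa using (p i).contDiff_aeval (𝕜 := ℝ) (⊤ : ℕ∞)))
      (fun k _ => (hs k).mul_left _) fun k i x _ => hD hab (hM i) (hp i) k x
  · exact tsum_congr fun i => by rw [smoothCutoff_eq_one (hM i).le hx, one_mul]

end SmoothExtension

section FourierSeries

variable {a b : ℝ} {f : ℝ → ℂ}

lemma fourierCoeffOn_deriv (hab : a < b) (hf : ContDiff ℝ 1 f) (hper : f.Periodic (b - a))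
    (n : ℤ) :
    fourierCoeffOn hab (deriv f) n
      = 2 * π * Complex.I * n / (b - a) * fourierCoeffOn hab f n := by
  have hd : ∀ x ∈ uIcc a b, HasDerivAt f (deriv f x) x := fun x _ =>
    (hf.differentiable one_ne_zero x).hasDerivAt
  have hi : IntervalIntegrable (deriv f) volume a b :=
    (hf.continuous_deriv le_rfl).intervalIntegrable _ _
  have hends : f b = f a := by simpa using hper a
  have hba : (b - a : ℂ) ≠ 0 := by exact_mod_cast (sub_pos.mpr hab).ne'
  rcases eq_or_ne n 0 with rfl | hn
  · rw [fourierCoeffOn_eq_integral]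
    simp [integral_eq_sub_of_hasDerivAt hd hi, hends]
  · have hn' : (n : ℂ) ≠ 0 := Int.cast_ne_zero.mpr hn
    have hpi : (π : ℂ) ≠ 0 := by exact_mod_cast pi_ne_zero
    rw [fourierCoeffOn_of_hasDerivAt hab hn hd hi, hends]
    field_simp
    ring

lemma fourierCoeffOn_iteratedDeriv (hab : a < b) {k : ℕ} (hf : ContDiff ℝ k f)
    (hper : f.Periodic (b - a)) (n : ℤ) :
    fourierCoeffOn hab (iteratedDeriv k f) n
      = (2 * π * Complex.I * n / (b - a)) ^ k * fourierCoeffOn hab f n := by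
  induction k generalizing f with
  | zero => simp
  | succ k ih =>
    have hperiodic : (deriv f).Periodic (b - a) := fun t => by
      rw [← deriv_comp_add_const, funext hper]
    rw [iteratedDeriv_succ', ih (contDiff_succ_iff_deriv.mp hf).2.2 hperiodic,
      fourierCoeffOn_deriv hab (hf.of_le (by simp)) hper, pow_succ, mul_assoc (_ ^ k)]

lemma norm_fourierCoeffOn_le (hab : a < b) (n : ℤ) :
    ‖fourierCoeffOn hab f n‖ ≤ 1 / (b - a) * ∫ x in a..b, ‖f x‖ := by
  rw [fourierCoeffOn_eq_integral, norm_smul, Real.norm_of_nonneg (by positivity)]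
  gcongr
  refine (intervalIntegral.norm_integral_le_integral_norm hab.le).trans_eq ?_
  simp only [norm_smul, fourier_apply, Circle.norm_coe, one_mul]

lemma exists_bound_pow_mul_norm_fourierCoeffOn (hab : a < b) {k : ℕ} (hf : ContDiff ℝ k f)
    (hper : f.Periodic (b - a)) :
    ∃ C : ℝ, ∀ n : ℤ, |(n : ℝ)| ^ k * ‖fourierCoeffOn hab f n‖ ≤ C := by
  have hba : 0 < b - a := sub_pos.mpr hab
  refine ⟨((b - a) / (2 * π)) ^ k * (1 / (b - a) * ∫ x in a..b, ‖iteratedDeriv k f x‖),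
    fun n => ?_⟩
  have hmul : ‖fourierCoeffOn hab (iteratedDeriv k f) n‖
      = (2 * π / (b - a)) ^ k * (|(n : ℝ)| ^ k * ‖fourierCoeffOn hab f n‖) := by
    rw [fourierCoeffOn_iteratedDeriv hab hf hper, norm_mul, norm_pow, ← mul_assoc, ← mul_pow,
      ← Complex.ofReal_sub]
    simp only [Complex.norm_div, Complex.norm_mul, Complex.norm_ofNat, Complex.norm_real,
      Complex.norm_I, Complex.norm_intCast, Real.norm_of_nonneg pi_pos.le,
      Real.norm_of_nonneg hba.le, mul_one]
    rw [mul_div_right_comm]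
  calc |(n : ℝ)| ^ k * ‖fourierCoeffOn hab f n‖
      = ((b - a) / (2 * π)) ^ k * ‖fourierCoeffOn hab (iteratedDeriv k f) n‖ := by
        rw [hmul, ← mul_assoc, ← mul_pow, div_mul_div_cancel₀ (by positivity),
          div_self hba.ne', one_pow, one_mul]
    _ ≤ _ := by
        gcongr
        exact norm_fourierCoeffOn_le hab n

lemma hasSum_fourierCoeffOn_mul_fourier (hab : a < b) (hf : Continuous f)
    (hper : f.Periodic (b - a)) (hs : Summable (fourierCoeffOn hab f)) (x : ℝ) :
    HasSum (fun n : ℤ => fourierCoeffOn hab f n * fourier n (x : AddCircle (b - a))) (f x) := by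
  have : Fact (0 < b - a) := ⟨sub_pos.mpr hab⟩
  let F : C(AddCircle (b - a), ℂ) := ⟨hper.lift, continuous_coinduced_dom.mpr hf⟩
  have hcoeff : fourierCoeff F = fourierCoeffOn hab f := by
    ext n
    rw [fourierCoeff_eq_intervalIntegral F n a, fourierCoeffOn_eq_integral, add_sub_cancel]
    rfl
  have hF := has_pointwise_sum_fourier_series_of_summable (f := F) (hcoeff ▸ hs) x
  rwa [hcoeff] at hF

lemma integral_neg_self_eq_integral_add_comp_neg {E : Type*} [NormedAddCommGroup E]
    [NormedSpace ℝ E] {f : ℝ → E} {c : ℝ} (hf : IntervalIntegrable f volume (-c) c) :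
    ∫ t in (-c)..c, f t = ∫ t in (0 : ℝ)..c, (f t + f (-t)) := by
  have h0 : (0 : ℝ) ∈ uIcc (-c) c := by
    rcases le_total 0 c with h | h
    · exact uIcc_of_le (neg_le_self h) ▸ ⟨neg_nonpos.mpr h, h⟩
    · exact uIcc_of_ge (le_neg_self_iff.mpr h) ▸ ⟨h, neg_nonneg.mpr h⟩
  have hneg : IntervalIntegrable f volume (-c) 0 :=
    hf.mono_set (uIcc_subset_uIcc left_mem_uIcc h0)
  have hpos : IntervalIntegrable f volume 0 c := hf.mono_set (uIcc_subset_uIcc h0 right_mem_uIcc)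
  have hcomp : IntervalIntegrable (fun t => f (-t)) volume 0 c := by
    simpa using (hneg.comp_mul_left (c := -1)).symm
  rw [intervalIntegral.integral_add hpos hcomp, intervalIntegral.integral_comp_neg, neg_zero,
    add_comm, intervalIntegral.integral_add_adjacent_intervals hneg hpos]

lemma integral_neg_self_of_even {f : ℝ → ℝ} {c : ℝ} (heven : f.Even)
    (hf : IntervalIntegrable f volume (-c) c) :
    ∫ t in (-c)..c, f t = 2 * ∫ t in (0 : ℝ)..c, f t := by
  rw [integral_neg_self_eq_integral_add_comp_neg hf, ← intervalIntegral.integral_const_mul]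
  simp only [heven _, two_mul]

lemma fourier_coe_neg_pi_pi (n : ℤ) (t : ℝ) :
    fourier n (t : AddCircle (π - -π)) = Complex.exp ((n * t : ℝ) * Complex.I) := by
  have hpi : (π : ℂ) ≠ 0 := by exact_mod_cast pi_ne_zero
  rw [fourier_coe_apply]
  congr 1
  push_cast
  field_simp
  ring

variable {F : ℝ → ℝ}

lemma fourierCoeffOn_ofReal_of_even (heven : F.Even) (hF : IntervalIntegrable F volume (-π) π)
    (n : ℤ) :
    fourierCoeffOn (neg_lt_self pi_pos) (fun t => (F t : ℂ)) n
      = ((1 / π * ∫ t in (0 : ℝ)..π, F t * cos (n * t) : ℝ) : ℂ) := by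
  have hsum : ∀ t : ℝ,
      Complex.exp ((-n * t : ℝ) * Complex.I) * F t
        + Complex.exp ((-n * -t : ℝ) * Complex.I) * F (-t)
      = ((2 * (F t * cos (n * t)) : ℝ) : ℂ) := fun t => by
    rw [heven, neg_mul_neg]
    push_cast
    rw [Complex.cos]
    ring_nf
  have hFC : IntervalIntegrable (fun t => (F t : ℂ)) volume (-π) π := ⟨hF.1.ofReal, hF.2.ofReal⟩
  rw [fourierCoeffOn_eq_integral]
  simp only [fourier_coe_neg_pi_pi, smul_eq_mul, Int.cast_neg]
  rw [integral_neg_self_eq_integral_add_comp_neg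
    (hFC.continuousOn_mul (Continuous.continuousOn (by fun_prop)))]
  simp only [hsum, intervalIntegral.integral_ofReal, intervalIntegral.integral_const_mul]
  rw [Complex.real_smul, ← Complex.ofReal_mul]
  congr 1
  field_simp
  ring

/-- The coefficients of the cosine series of an even `2π`-periodic function. -/
noncomputable def cosineCoeff (F : ℝ → ℝ) (n : ℕ) : ℝ :=
  (if n = 0 then 1 / π else 2 / π) * ∫ t in (0 : ℝ)..π, F t * cos (n * t)

lemma norm_fourierCoeffOn_le_abs_cosineCoeff (heven : F.Even)
    (hF : IntervalIntegrable F volume (-π) π) (n : ℕ) :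
    ‖fourierCoeffOn (neg_lt_self pi_pos) (fun t => (F t : ℂ)) n‖ ≤ |cosineCoeff F n| := by
  rw [fourierCoeffOn_ofReal_of_even heven hF, Complex.norm_real, Real.norm_eq_abs, abs_mul,
    cosineCoeff, abs_mul, Int.cast_natCast]
  gcongr
  split_ifs
  · rfl
  · gcongr
    exact one_le_two

lemma abs_cosineCoeff_le_two_mul_norm_fourierCoeffOn (heven : F.Even)
    (hF : IntervalIntegrable F volume (-π) π) (n : ℕ) :
    |cosineCoeff F n| ≤ 2 * ‖fourierCoeffOn (neg_lt_self pi_pos) (fun t => (F t : ℂ)) n‖ := by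
  rw [fourierCoeffOn_ofReal_of_even heven hF, Complex.norm_real, Real.norm_eq_abs, abs_mul,
    cosineCoeff, abs_mul, Int.cast_natCast, ← mul_assoc]
  gcongr
  rw [abs_of_pos (by positivity : 0 < 1 / π), mul_one_div]
  split_ifs
  · rw [abs_of_pos (by positivity)]
    gcongr
    exact one_le_two
  · rw [abs_of_pos (by positivity)]

lemma exists_bound_pow_mul_abs_cosineCoeff (heven : F.Even) {k : ℕ} (hF : ContDiff ℝ k F)
    (hper : F.Periodic (2 * π)) :
    ∃ C : ℝ, ∀ n : ℕ, (n : ℝ) ^ k * |cosineCoeff F n| ≤ C := by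
  obtain ⟨C, hC⟩ := exists_bound_pow_mul_norm_fourierCoeffOn (neg_lt_self pi_pos)
    (Complex.ofRealCLM.contDiff.comp hF)
    ((sub_neg_eq_add π π).trans (two_mul π).symm ▸ hper.comp Complex.ofReal)
  refine ⟨2 * C, fun n => ?_⟩
  calc (n : ℝ) ^ k * |cosineCoeff F n|
      ≤ n ^ k * (2 * ‖fourierCoeffOn (neg_lt_self pi_pos) (fun t => (F t : ℂ)) n‖) := by
        gcongr
        exact abs_cosineCoeff_le_two_mul_norm_fourierCoeffOn heven
          (hF.continuous.intervalIntegrable _ _) n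
    _ = 2 * (|((n : ℤ) : ℝ)| ^ k
          * ‖fourierCoeffOn (neg_lt_self pi_pos) (fun t => (F t : ℂ)) n‖) := by
        rw [Int.cast_natCast, Nat.abs_cast]
        ring
    _ ≤ 2 * C := by
        gcongr
        exact hC n

lemma summable_succ_pow_mul_of_pow_mul_le {u : ℕ → ℝ} {k : ℕ} {C : ℝ} (hu : ∀ n, 0 ≤ u n)
    (h : ∀ n : ℕ, (n : ℝ) ^ (k + 2) * u n ≤ C) :
    Summable fun n : ℕ => ((n : ℝ) + 1) ^ k * u n := by
  have hsq : Summable fun n : ℕ => 2 ^ k * C * (1 / ((n + 1 : ℕ) : ℝ) ^ 2) :=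
    ((summable_nat_add_iff 1).mpr (Real.summable_one_div_nat_pow.mpr one_lt_two)).mul_left _
  refine (summable_nat_add_iff 1).mp (hsq.of_nonneg_of_le (fun n => ?_) fun n => ?_)
  · have := hu (n + 1)
    positivity
  · have hn := hu (n + 1)
    rw [mul_one_div, le_div_iff₀ (by positivity)]
    calc (((n + 1 : ℕ) : ℝ) + 1) ^ k * u (n + 1) * ((n + 1 : ℕ) : ℝ) ^ 2
        ≤ (2 * ((n + 1 : ℕ) : ℝ)) ^ k * u (n + 1) * ((n + 1 : ℕ) : ℝ) ^ 2 := by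
          gcongr
          push_cast
          linarith [(n.cast_nonneg : (0 : ℝ) ≤ n)]
      _ = 2 ^ k * (((n + 1 : ℕ) : ℝ) ^ (k + 2) * u (n + 1)) := by ring
      _ ≤ 2 ^ k * C := by
          gcongr
          exact h (n + 1)

lemma summable_succ_pow_mul_abs_cosineCoeff (heven : F.Even) (hF : ContDiff ℝ (⊤ : ℕ∞) F)
    (hper : F.Periodic (2 * π)) (k : ℕ) :
    Summable fun n : ℕ => ((n : ℝ) + 1) ^ k * |cosineCoeff F n| := by
  obtain ⟨C, hC⟩ := exists_bound_pow_mul_abs_cosineCoeff heven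
    (contDiff_infty.mp hF (k + 2)) hper
  exact summable_succ_pow_mul_of_pow_mul_le (fun n => abs_nonneg _) hC

lemma summable_fourierCoeffOn_of_even (heven : F.Even) (hF : IntervalIntegrable F volume (-π) π)
    (hs : Summable fun n => |cosineCoeff F n|) :
    Summable (fourierCoeffOn (neg_lt_self pi_pos) (fun t => (F t : ℂ))) := by
  have hnat : Summable fun n : ℕ => fourierCoeffOn (neg_lt_self pi_pos) (fun t => (F t : ℂ)) n :=
    hs.of_norm_bounded fun n => norm_fourierCoeffOn_le_abs_cosineCoeff heven hF n
  refine Summable.of_nat_of_neg hnat (hnat.congr fun n => ?_)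
  simp only [fourierCoeffOn_ofReal_of_even heven hF, Int.cast_neg, neg_mul, cos_neg]

lemma hasSum_cosineCoeff_mul_cos (heven : F.Even) (hF : Continuous F)
    (hper : F.Periodic (2 * π)) (hs : Summable fun n => |cosineCoeff F n|) (φ : ℝ) :
    HasSum (fun n : ℕ => cosineCoeff F n * cos (n * φ)) (F φ) := by
  let I : ℤ → ℝ := fun n => ∫ t in (0 : ℝ)..π, F t * cos (n * t)
  have hi := hF.intervalIntegrable (μ := volume) (-π) π
  have hseries := hasSum_fourierCoeffOn_mul_fourier (neg_lt_self pi_pos)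
    (Complex.continuous_ofReal.comp hF)
    ((sub_neg_eq_add π π).trans (two_mul π).symm ▸ hper.comp Complex.ofReal)
    (summable_fourierCoeffOn_of_even heven hi hs) φ
  have hcoeff : ∀ n : ℤ, fourierCoeffOn (neg_lt_self pi_pos) (Complex.ofReal ∘ F) n
      = ((1 / π * I n : ℝ) : ℂ) := fourierCoeffOn_ofReal_of_even heven hi
  simp only [hcoeff, fourier_coe_neg_pi_pi] at hseries
  have hpair : ∀ n : ℕ,
      ((1 / π * I n : ℝ) : ℂ) * Complex.exp (((n : ℤ) * φ : ℝ) * Complex.I)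
        + ((1 / π * I (-n) : ℝ) : ℂ) * Complex.exp (((-n : ℤ) * φ : ℝ) * Complex.I)
      = ((2 / π * I n * cos (n * φ) : ℝ) : ℂ) := fun n => by
    have hneg : I (-n) = I n := by simp only [I, Int.cast_neg, neg_mul, cos_neg]
    rw [hneg]
    push_cast
    rw [Complex.cos]
    ring_nf
  have hnat := hseries.nat_add_neg
  simp only [hpair, Int.cast_zero, zero_mul, Complex.ofReal_zero, Complex.exp_zero, mul_one,
    Function.comp_apply, ← Complex.ofReal_add, Complex.hasSum_ofReal] at hnat
  have hsub := hnat.sub (hasSum_ite_eq 0 (1 / π * I 0))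
  rw [add_sub_cancel_right] at hsub
  refine hsub.congr_fun fun n => ?_
  rw [cosineCoeff]
  split_ifs with hn
  · subst hn
    simp only [I, Nat.cast_zero, Int.cast_zero, zero_mul, cos_zero, mul_one]
    ring
  · simp only [I, Int.cast_natCast, sub_zero]

end FourierSeries

section ChebyshevSeries

lemma chebT_cos (n : ℕ) (t : ℝ) : chebT n (cos t) = cos (n * t) := by
  simp [chebT]

lemma abs_chebT_le_one (n : ℕ) {x : ℝ} (hx : x ∈ Icc (-1 : ℝ) 1) : |chebT n x| ≤ 1 :=
  Polynomial.Chebyshev.abs_eval_T_real_le_one n (abs_le.mpr hx)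

lemma iterate_derivative_chebyshev_T_eval_one_le (n k : ℕ) :
    (Polynomial.derivative^[k] (Polynomial.Chebyshev.T ℝ n)).eval 1 ≤ ((n : ℝ) ^ 2) ^ k := by
  induction k with
  | zero => simp
  | succ k ih =>
    have hrec := Polynomial.Chebyshev.iterate_derivative_T_eval_one_recurrence (R := ℝ) n k
    have eval_nonneg : ∀ j : ℕ,
        0 ≤ (Polynomial.derivative^[j] (Polynomial.Chebyshev.T ℝ n)).eval 1 := fun j =>
      (abs_nonneg _).trans
        (Polynomial.Chebyshev.abs_iterate_derivative_T_real_le n j (x := 1) (by simp))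
    have hk : (0 : ℝ) ≤ k := Nat.cast_nonneg k
    push_cast at hrec
    rw [pow_succ']
    nlinarith [mul_nonneg hk (eval_nonneg (k + 1)), mul_nonneg (sq_nonneg (k : ℝ)) (eval_nonneg k),
      mul_le_mul_of_nonneg_left ih (sq_nonneg (n : ℝ))]

lemma abs_iterate_derivative_chebyshev_T_eval_le (n k : ℕ) {x : ℝ} (hx : x ∈ Icc (-1 : ℝ) 1) :
    |(Polynomial.derivative^[k] (Polynomial.Chebyshev.T ℝ n)).eval x| ≤ ((n : ℝ) ^ 2) ^ k :=
  (Polynomial.Chebyshev.abs_iterate_derivative_T_real_le n k (abs_le.mpr hx)).trans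
    (iterate_derivative_chebyshev_T_eval_one_le n k)

lemma tendstoUniformlyOn_sum_mul_chebT {c : ℕ → ℝ} (hc : Summable fun n => |c n|) :
    TendstoUniformlyOn (fun N x => ∑ n ∈ Finset.range N, c n * chebT n x)
      (fun x => ∑' n, c n * chebT n x) atTop (Icc (-1 : ℝ) 1) :=
  tendstoUniformlyOn_tsum_nat hc fun n x hx => by
    rw [norm_mul, Real.norm_eq_abs, Real.norm_eq_abs]
    exact mul_le_of_le_one_right (abs_nonneg _) (abs_chebT_le_one n hx)

lemma exists_contDiff_eqOn_tsum_mul_chebT {c : ℕ → ℝ}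
    (hc : ∀ k : ℕ, Summable fun n : ℕ => |c n| * (((n : ℝ) + 1) ^ 2) ^ k) :
    ∃ A : ℝ → ℝ, ContDiff ℝ (⊤ : ℕ∞) A ∧
      EqOn (fun x => ∑' n, c n * chebT n x) A (Icc (-1 : ℝ) 1) := by
  have markov : ∀ n j : ℕ, ∀ y ∈ Icc (-1 : ℝ) 1,
      |(Polynomial.derivative^[j] (c n • Polynomial.Chebyshev.T ℝ n)).eval y|
        ≤ |c n| * (((n : ℝ) + 1) ^ 2) ^ j := by
    intro n j y hy
    rw [Polynomial.iterate_derivative_smul, Polynomial.eval_smul, smul_eq_mul, abs_mul]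
    refine mul_le_mul_of_nonneg_left
      ((abs_iterate_derivative_chebyshev_T_eval_le n j hy).trans ?_) (abs_nonneg _)
    gcongr
    linarith
  obtain ⟨A, hA, heq⟩ := exists_contDiff_eqOn_tsum_eval (by norm_num) (fun n => by positivity)
    markov hc
  exact ⟨A, hA, by simpa only [chebT, Polynomial.eval_smul, smul_eq_mul] using heq⟩

lemma integral_div_sqrt_one_sub_sq (f : ℝ → ℝ) :
    ∫ x in (-1 : ℝ)..1, f x / Real.sqrt (1 - x ^ 2) = ∫ t in (0 : ℝ)..π, f (cos t) := by
  rw [← Polynomial.Chebyshev.integral_measureT_eq_integral_cos,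
    Polynomial.Chebyshev.integral_measureT]
  simp only [div_eq_mul_inv, Real.sqrt_inv]

lemma fourierCheb_eq_cosineCoeff (g : ℝ → ℝ) (n : ℕ) :
    fourierCheb g n = cosineCoeff (g ∘ cos) n := by
  rw [fourierCheb, cosineCoeff]
  simp only [Function.comp_apply]
  split_ifs with hn
  · simp only [hn, integral_div_sqrt_one_sub_sq, Nat.cast_zero, zero_mul, cos_zero, mul_one]
  · rw [integral_div_sqrt_one_sub_sq (fun x => g x * chebT n x)]
    simp only [chebT_cos]

lemma summable_succ_pow_mul_abs_fourierCheb {g : ℝ → ℝ}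
    (hg : ContDiffOn ℝ (⊤ : ℕ∞) g (Icc (-1) 1)) (k : ℕ) :
    Summable fun n : ℕ => ((n : ℝ) + 1) ^ k * |fourierCheb g n| := by
  simp only [fourierCheb_eq_cosineCoeff]
  exact summable_succ_pow_mul_abs_cosineCoeff (F := g ∘ cos) (fun t => congrArg g (cos_neg t))
    (hg.comp_contDiff contDiff_cos cos_mem_Icc) (cos_periodic.comp g) k

lemma hasSum_fourierCheb_mul_chebT {g : ℝ → ℝ} (hg : ContinuousOn g (Icc (-1) 1))
    (hs : Summable fun n => |fourierCheb g n|) {x : ℝ} (hx : x ∈ Icc (-1 : ℝ) 1) :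
    HasSum (fun n => fourierCheb g n * chebT n x) (g x) := by
  obtain ⟨φ, rfl⟩ : ∃ φ, cos φ = x := ⟨arccos x, cos_arccos hx.1 hx.2⟩
  simp only [fourierCheb_eq_cosineCoeff, chebT_cos] at hs ⊢
  exact hasSum_cosineCoeff_mul_cos (F := g ∘ cos) (fun t => congrArg g (cos_neg t))
    (hg.comp_continuous continuous_cos cos_mem_Icc) (cos_periodic.comp g) hs φ

lemma sigmaCheb_pos (n : ℕ) : 0 < sigmaCheb n := by
  rw [sigmaCheb]
  split_ifs with hn
  · have := log_pos one_lt_two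
    positivity
  · have := Nat.pos_of_ne_zero hn
    positivity

lemma inv_sigmaCheb_le (n : ℕ) : (sigmaCheb n)⁻¹ ≤ 4 * ((n : ℝ) + 1) := by
  rw [sigmaCheb]
  split_ifs with hn
  · subst hn
    have := log_two_gt_d9
    rw [inv_le_comm₀ (by positivity) (by positivity)]
    norm_num
    linarith
  · rw [one_div, inv_inv]
    have : (0 : ℝ) ≤ n := n.cast_nonneg
    linarith

lemma summable_abs_fourierCheb_div_sigmaCheb {g : ℝ → ℝ}
    (hg : ContDiffOn ℝ (⊤ : ℕ∞) g (Icc (-1) 1)) (k : ℕ) :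
    Summable fun n : ℕ => |fourierCheb g n / sigmaCheb n| * (((n : ℝ) + 1) ^ 2) ^ k := by
  refine ((summable_succ_pow_mul_abs_fourierCheb hg (2 * k + 1)).mul_left 4).of_nonneg_of_le
    (fun n => by positivity) fun n => ?_
  rw [div_eq_mul_inv, abs_mul, abs_of_pos (inv_pos.mpr (sigmaCheb_pos n)), ← pow_mul]
  calc _ ≤ |fourierCheb g n| * (4 * ((n : ℝ) + 1)) * ((n : ℝ) + 1) ^ (2 * k) := by
        gcongr
        exact inv_sigmaCheb_le n
    _ = _ := by ring

end ChebyshevSeries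

section LogarithmicKernel

lemma integral_chebyshev_U_even_measureT (n : ℕ) :
    ∫ x, (Polynomial.Chebyshev.U ℝ (2 * n)).eval x ∂Polynomial.Chebyshev.measureT = π := by
  induction n with
  | zero => simpa using Polynomial.Chebyshev.integral_eval_T_real_measureT_zero
  | succ n ih =>
    have hT := Polynomial.Chebyshev.integral_eval_T_real_measureT_of_ne_zero
      (n := 2 * (n : ℤ) + 2) (by positivity)
    rw [Nat.cast_succ, mul_add_one, Polynomial.Chebyshev.U_eq_two_mul_T_add_U ℝ (2 * n)]
    simp only [Polynomial.eval_add, Polynomial.eval_mul, Polynomial.eval_ofNat]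
    rw [integral_add (Polynomial.Chebyshev.integrable_measureT (by fun_prop))
      (Polynomial.Chebyshev.integrable_measureT (by fun_prop)), MeasureTheory.integral_const_mul,
      hT, ih, mul_zero, zero_add]

lemma integral_cos_mul_chebyshev_U_odd (n : ℕ) :
    ∫ v in (0 : ℝ)..π, cos v * (Polynomial.Chebyshev.U ℝ (2 * n + 1)).eval (cos v) = π := by
  have hT := Polynomial.Chebyshev.integral_eval_T_real_measureT_of_ne_zero
    (n := 2 * (n : ℤ) + 2) (by positivity)
  have hU := integral_chebyshev_U_even_measureT (n + 1)
  rw [Nat.cast_succ, mul_add_one] at hU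
  have hX : ∀ x : ℝ, x * (Polynomial.Chebyshev.U ℝ (2 * n + 1)).eval x
      = (Polynomial.Chebyshev.U ℝ (2 * n + 2)).eval x
        - (Polynomial.Chebyshev.T ℝ (2 * n + 2)).eval x := by
    intro x
    rw [Polynomial.Chebyshev.T_eq_U_sub_X_mul_U ℝ (2 * n + 2),
      show (2 * (n : ℤ) + 2 - 1) = 2 * n + 1 by ring]
    simp
  rw [← Polynomial.Chebyshev.integral_measureT_eq_integral_cos
    (f := fun x => x * (Polynomial.Chebyshev.U ℝ (2 * n + 1)).eval x)]
  simp only [hX]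
  rw [integral_sub (Polynomial.Chebyshev.integrable_measureT (by fun_prop))
    (Polynomial.Chebyshev.integrable_measureT (by fun_prop)), hT, hU, sub_zero]

-- Integration by parts against `sin (2 n v) = U_{2 n - 1} (cos v) sin v`: the factor `sin v` makes
-- the boundary terms vanish and cancels the singularity of the derivative of `log (sin v)`.
lemma integral_log_sin_mul_cos_two_mul {n : ℕ} (hn : n ≠ 0) :
    ∫ v in (0 : ℝ)..π, log (sin v) * cos (2 * n * v) = -(π / (2 * n)) := by
  obtain ⟨m, rfl⟩ := Nat.exists_eq_succ_of_ne_zero hn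
  set N : ℝ := 2 * ((m + 1 : ℕ) : ℝ) with hN
  have hN0 : 0 < N := by positivity
  let W : ℝ → ℝ := fun v => (Polynomial.Chebyshev.U ℝ (2 * m + 1)).eval (cos v)
  have hW : Continuous W := by fun_prop
  have hWsin : ∀ v, W v * sin v = sin (N * v) := fun v => by
    simp only [W, Polynomial.Chebyshev.U_real_cos v (2 * m + 1), hN]
    push_cast
    ring_nf
  have hWlog : ∀ v, W v * (sin v * log (sin v)) = sin (N * v) * log (sin v) := fun v => by
    rw [← mul_assoc, hWsin]
  have hcosW : IntervalIntegrable (fun v => cos v * W v) volume 0 π :=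
    Continuous.intervalIntegrable (by fun_prop) _ _
  have hlog : IntervalIntegrable (fun v => N * (log (sin v) * cos (N * v))) volume 0 π :=
    (intervalIntegrable_log_sin.mul_continuousOn (by fun_prop)).const_mul N
  have hderiv : ∀ v ∈ Ioo 0 π, HasDerivAt (fun v => W v * (sin v * log (sin v)))
      (cos v * W v + N * (log (sin v) * cos (N * v))) v := by
    intro v hv
    have hsin : 0 < sin v := sin_pos_of_mem_Ioo hv
    simp only [hWlog]
    refine ((((hasDerivAt_id v).const_mul N).sin).mul
      ((hasDerivAt_sin v).log hsin.ne')).congr_deriv ?_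
    rw [id, ← hWsin]
    field_simp
    ring
  have hparts := integral_eq_sub_of_hasDerivAt_of_le pi_pos.le
    (hW.mul (continuous_mul_log.comp continuous_sin)).continuousOn hderiv (hcosW.add hlog)
  rw [intervalIntegral.integral_add hcosW hlog, intervalIntegral.integral_const_mul,
    integral_cos_mul_chebyshev_U_odd] at hparts
  simp only [Pi.mul_apply, Function.comp_apply, sin_pi, sin_zero, zero_mul, mul_zero,
    sub_zero] at hparts
  field_simp
  linarith

lemma periodic_log_sin_half : Function.Periodic (fun u => log (sin (u / 2))) (2 * π) := by
  intro u
  have hhalf : (u + 2 * π) / 2 = u / 2 + π := by ring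
  simp only [hhalf, sin_add_pi, log_neg_eq_log]

lemma even_log_sin_half : Function.Even fun u => log (sin (u / 2)) := by
  intro u
  simp only [neg_div, sin_neg, log_neg_eq_log]

lemma intervalIntegrable_log_sin_half (a b : ℝ) :
    IntervalIntegrable (fun u => log (sin (u / 2))) volume a b := by
  have h : AnalyticOnNhd ℝ (fun u : ℝ => sin (u / 2)) Set.univ := fun u _ => by fun_prop
  exact (h.mono (Set.subset_univ _)).meromorphicOn.intervalIntegrable_log

lemma intervalIntegrable_log_abs_sub_cos (x a b : ℝ) :
    IntervalIntegrable (fun t => log |x - cos t|) volume a b := by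
  have h : AnalyticOnNhd ℝ (fun t : ℝ => x - cos t) Set.univ := fun t _ => by fun_prop
  exact (h.mono (Set.subset_univ _)).meromorphicOn.intervalIntegrable_log_norm

lemma periodic_mul_cos_nat_mul_sub {L : ℝ → ℝ} (hper : L.Periodic (2 * π)) (n : ℕ) (φ : ℝ) :
    Function.Periodic (fun u => L u * cos (n * (u - φ))) (2 * π) := by
  intro u
  have hshift : (n : ℝ) * (u + 2 * π - φ) = n * (u - φ) + n * (2 * π) := by ring
  simp only [hper u, hshift, cos_add_nat_mul_two_pi]

lemma integral_log_sin_half_mul_cos (n : ℕ) :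
    ∫ u in (-π)..π, log (sin (u / 2)) * cos (n * u)
      = if n = 0 then -(2 * π * log 2) else -(π / n) := by
  have hper : Function.Periodic (fun u => log (sin (u / 2)) * cos (n * u)) (2 * π) := by
    simpa using periodic_mul_cos_nat_mul_sub periodic_log_sin_half n 0
  have hshift := hper.intervalIntegral_add_eq (-π) 0
  rw [show -π + 2 * π = π by ring, zero_add] at hshift
  have hscale := intervalIntegral.integral_comp_div (a := 0) (b := 2 * π)
    (fun v => log (sin v) * cos (2 * n * v)) (two_ne_zero' ℝ)
  have harg : ∀ u : ℝ, 2 * n * (u / 2) = n * u := fun u => by ring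
  simp only [harg, zero_div, mul_div_cancel_left₀ π (two_ne_zero' ℝ), smul_eq_mul] at hscale
  rw [hshift, hscale]
  split_ifs with hn
  · subst hn
    simp only [Nat.cast_zero, mul_zero, zero_mul, cos_zero, mul_one, integral_log_sin_zero_pi]
    ring
  · rw [integral_log_sin_mul_cos_two_mul hn]
    have : (n : ℝ) ≠ 0 := Nat.cast_ne_zero.mpr hn
    field_simp

lemma integral_comp_add_mul_cos_of_even {L : ℝ → ℝ} (heven : L.Even)
    (hper : L.Periodic (2 * π)) (hL : IntervalIntegrable L volume (-π) π) (n : ℕ) (φ : ℝ) :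
    ∫ t in (-π)..π, L (t + φ) * cos (n * t)
      = cos (n * φ) * ∫ u in (-π)..π, L u * cos (n * u) := by
  have hint : ∀ ψ : ℝ, IntervalIntegrable (fun u => L u * cos (n * (u - ψ))) volume (-π) π :=
    fun ψ => hL.mul_continuousOn (by fun_prop)
  have hint0 : IntervalIntegrable (fun u => L u * cos (n * u)) volume (-π) π := by
    simpa using hint 0
  have hsym : ∀ u : ℝ, L u * cos (n * (u - φ)) + L (-u) * cos (n * (-u - φ))
      = cos (n * φ) * (L u * cos (n * u) + L (-u) * cos (n * -u)) := fun u => by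
    simp only [heven u, mul_sub, cos_sub, mul_neg, cos_neg, sin_neg]
    ring
  calc ∫ t in (-π)..π, L (t + φ) * cos (n * t)
      = ∫ u in (-π + φ)..(-π + φ + 2 * π), L u * cos (n * (u - φ)) := by
        rw [show -π + φ + 2 * π = π + φ by ring, ← intervalIntegral.integral_comp_add_right]
        simp only [add_sub_cancel_right]
    _ = ∫ u in (-π)..π, L u * cos (n * (u - φ)) := by
        rw [(periodic_mul_cos_nat_mul_sub hper n φ).intervalIntegral_add_eq _ (-π),
          show -π + 2 * π = π by ring]
    _ = cos (n * φ) * ∫ u in (-π)..π, L u * cos (n * u) := by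
        rw [integral_neg_self_eq_integral_add_comp_neg (hint φ),
          integral_neg_self_eq_integral_add_comp_neg hint0,
          ← intervalIntegral.integral_const_mul]
        simp only [hsym]

lemma ae_sin_half_ne_zero (φ : ℝ) : ∀ᵐ t : ℝ, sin ((t + φ) / 2) ≠ 0 := by
  have hcount : {t : ℝ | sin ((t + φ) / 2) = 0}.Countable := by
    refine (Set.countable_range fun k : ℤ => 2 * (k * π) - φ).mono fun t ht => ?_
    obtain ⟨k, hk⟩ := sin_eq_zero_iff.mp ht
    exact ⟨k, by simp only [hk]; ring⟩
  exact hcount.ae_notMem volume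

lemma ae_log_abs_cos_sub_cos_eq (φ : ℝ) :
    ∀ᵐ t : ℝ, log |cos φ - cos t|
      = log 2 + log (sin ((t + φ) / 2)) + log (sin ((t + -φ) / 2)) := by
  filter_upwards [ae_sin_half_ne_zero φ, ae_sin_half_ne_zero (-φ)] with t hadd hsub
  have hprod : cos φ - cos t = 2 * sin ((t + φ) / 2) * sin ((t + -φ) / 2) := by
    rw [cos_sub_cos, show (φ - t) / 2 = -((t + -φ) / 2) by ring, sin_neg, add_comm φ t]
    ring
  rw [log_abs, hprod, log_mul (mul_ne_zero two_ne_zero hadd) hsub, log_mul two_ne_zero hadd]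

lemma integral_cos_nat_mul_neg_pi_pi (n : ℕ) :
    ∫ t in (-π)..π, cos (n * t) = if n = 0 then 2 * π else 0 := by
  split_ifs with hn
  · simp [hn, two_mul]
  · rw [intervalIntegral.integral_comp_mul_left (fun t => cos t) (Nat.cast_ne_zero.mpr hn)]
    simp [sin_nat_mul_pi]

lemma integral_log_abs_cos_sub_cos_mul_cos_neg_pi_pi (φ : ℝ) (n : ℕ) :
    ∫ t in (-π)..π, log |cos φ - cos t| * cos (n * t)
      = -(4 * π * sigmaCheb n) * cos (n * φ) := by
  have hcos : IntervalIntegrable (fun t => log 2 * cos (n * t)) volume (-π) π :=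
    Continuous.intervalIntegrable (by fun_prop) _ _
  have hlog : ∀ ψ : ℝ, IntervalIntegrable (fun t => log (sin ((t + ψ) / 2)) * cos (n * t))
      volume (-π) π := fun ψ => by
    refine IntervalIntegrable.mul_continuousOn ?_ (by fun_prop)
    simpa using (intervalIntegrable_log_sin_half (-π + ψ) (π + ψ)).comp_add_right ψ
  have hshift := integral_comp_add_mul_cos_of_even even_log_sin_half periodic_log_sin_half
    (intervalIntegrable_log_sin_half _ _) n
  have hsplit : ∀ᵐ t : ℝ, t ∈ uIoc (-π) π → log |cos φ - cos t| * cos (n * t)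
      = log 2 * cos (n * t) + log (sin ((t + φ) / 2)) * cos (n * t)
        + log (sin ((t + -φ) / 2)) * cos (n * t) := by
    filter_upwards [ae_log_abs_cos_sub_cos_eq φ] with t ht _
    rw [ht]
    ring
  rw [intervalIntegral.integral_congr_ae hsplit,
    intervalIntegral.integral_add (hcos.add (hlog φ)) (hlog (-φ)),
    intervalIntegral.integral_add hcos (hlog φ), intervalIntegral.integral_const_mul,
    hshift, hshift, mul_neg, cos_neg, integral_log_sin_half_mul_cos,
    integral_cos_nat_mul_neg_pi_pi, sigmaCheb]
  split_ifs with hn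
  · simp only [hn, Nat.cast_zero, zero_mul, cos_zero]
    ring
  · have : (n : ℝ) ≠ 0 := Nat.cast_ne_zero.mpr hn
    field_simp
    ring

lemma integral_log_abs_cos_sub_cos_mul_cos (φ : ℝ) (n : ℕ) :
    ∫ t in (0 : ℝ)..π, log |cos φ - cos t| * cos (n * t)
      = -(2 * π * sigmaCheb n) * cos (n * φ) := by
  have heven : Function.Even fun t => log |cos φ - cos t| * cos (n * t) := fun t => by
    simp only [cos_neg, mul_neg]
  have h := integral_neg_self_of_even heven
    ((intervalIntegrable_log_abs_sub_cos (cos φ) (-π) π).mul_continuousOn (by fun_prop))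
  rw [integral_log_abs_cos_sub_cos_mul_cos_neg_pi_pi] at h
  linarith

lemma hasSum_integral_mul_tsum {ι : Type*} [Countable ι] {a b : ℝ} {K : ℝ → ℝ}
    (hK : IntervalIntegrable K volume a b) {u : ι → ℝ → ℝ} (hu : ∀ i, Continuous (u i))
    {c : ι → ℝ} (hc : Summable c) (hle : ∀ i t, |u i t| ≤ c i) :
    HasSum (fun i => ∫ t in a..b, K t * u i t) (∫ t in a..b, K t * ∑' i, u i t) := by
  have hsum : ∀ t, HasSum (fun i => u i t) (∑' i, u i t) := fun t =>
    (hc.of_norm_bounded (f := fun i => u i t) fun i => hle i t).hasSum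
  refine intervalIntegral.hasSum_integral_of_dominated_convergence (fun i t => |K t| * c i)
    (fun i => (hK.mul_continuousOn (hu i).continuousOn).aestronglyMeasurable_restrict_uIoc)
    (fun i => .of_forall fun t _ => ?_) (.of_forall fun t _ => hc.mul_left _) ?_
    (.of_forall fun t _ => (hsum t).mul_left _)
  · rw [norm_mul, Real.norm_eq_abs, Real.norm_eq_abs]
    gcongr
    exact hle i t
  · simp only [tsum_mul_left]
    exact hK.abs.mul_const _

lemma hasSum_singleLayer_tsum_mul_chebT {c : ℕ → ℝ} (hc : Summable fun n => |c n|) {x : ℝ}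
    (hx : x ∈ Icc (-1 : ℝ) 1) :
    HasSum (fun n => sigmaCheb n * c n * chebT n x)
      (-(1 / (2 * π)) * ∫ y in (-1 : ℝ)..1,
        log |x - y| * ((∑' n, c n * chebT n y) / Real.sqrt (1 - y ^ 2))) := by
  obtain ⟨φ, rfl⟩ : ∃ φ, cos φ = x := ⟨arccos x, cos_arccos hx.1 hx.2⟩
  simp only [← mul_div_assoc]
  rw [integral_div_sqrt_one_sub_sq fun y => log |cos φ - y| * ∑' n, c n * chebT n y]
  simp only [chebT_cos]
  refine ((hasSum_integral_mul_tsum (intervalIntegrable_log_abs_sub_cos (cos φ) 0 π)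
    (fun n => by fun_prop) hc fun n t => ?_).mul_left _).congr_fun fun n => ?_
  · rw [abs_mul]
    exact mul_le_of_le_one_right (abs_nonneg _) (abs_cos_le_one _)
  · simp only [mul_left_comm _ (c n), intervalIntegral.integral_const_mul,
      integral_log_abs_cos_sub_cos_mul_cos]
    field_simp

end LogarithmicKernel

theorem single_layer_smooth_solution_general (g : ℝ → ℝ)
    (hg : ContDiffOn ℝ (⊤ : ℕ∞) g (Icc (-1) 1)) :
    ∃ A : ℝ → ℝ, ContDiff ℝ (⊤ : ℕ∞) A ∧
      TendstoUniformlyOn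
        (fun N x => ∑ n ∈ Finset.range N, (fourierCheb g n / sigmaCheb n) * chebT n x)
        A atTop (Icc (-1 : ℝ) 1) ∧
      ∀ x ∈ Icc (-1 : ℝ) 1,
        -(1 / (2 * π)) * ∫ y in (-1 : ℝ)..1,
            Real.log |x - y| * (A y / Real.sqrt (1 - y ^ 2))
          = g x := by
  have hdecay := summable_abs_fourierCheb_div_sigmaCheb hg
  have hsum : Summable fun n => |fourierCheb g n / sigmaCheb n| := by simpa using hdecay 0
  have hsum_g : Summable fun n => |fourierCheb g n| := by
    simpa using summable_succ_pow_mul_abs_fourierCheb hg 0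
  obtain ⟨A, hA, hseries⟩ := exists_contDiff_eqOn_tsum_mul_chebT hdecay
  refine ⟨A, hA, (tendstoUniformlyOn_sum_mul_chebT hsum).congr_right hseries, fun x hx => ?_⟩
  have hlayer := hasSum_singleLayer_tsum_mul_chebT hsum hx
  simp only [mul_div_cancel₀ _ (sigmaCheb_pos _).ne'] at hlayer
  rw [← hlayer.unique (hasSum_fourierCheb_mul_chebT hg.continuousOn hsum_g hx)]
  congr 1
  refine intervalIntegral.integral_congr fun y hy => ?_
  rw [Set.uIcc_of_le (by norm_num : (-1 : ℝ) ≤ 1)] at hy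
  simp only [← hseries hy]

/-- For a smooth right-hand side `g`, the series `α = Σ (ĝₙ/σₙ) Tₙ` converges
uniformly on `[-1,1]` to (the restriction of) a smooth function, and
`λ = α/√(1-x²)` solves the Laplace single-layer equation `S₀ λ = g`. -/
theorem single_layer_smooth_solution (g : ℝ → ℝ) (hg : ContDiff ℝ (⊤ : ℕ∞) g) :
    ∃ A : ℝ → ℝ, ContDiff ℝ (⊤ : ℕ∞) A ∧
      TendstoUniformlyOn
        (fun N x => ∑ n ∈ Finset.range N, (fourierCheb g n / sigmaCheb n) * chebT n x)
        A atTop (Icc (-1 : ℝ) 1) ∧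
      ∀ x ∈ Ioo (-1 : ℝ) 1,
        -(1 / (2 * π)) * ∫ y in (-1 : ℝ)..1,
            Real.log |x - y| * (A y / Real.sqrt (1 - y ^ 2))
          = g x := by
  obtain ⟨A, hA, hunif, hsol⟩ := single_layer_smooth_solution_general g hg.contDiffOn
  exact ⟨A, hA, hunif, fun x hx => hsol x (Ioo_subset_Icc_self hx)⟩
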